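/- Let M ≥ 0, let u ∈ D_M with Δu = f, and let v be continuous on Σ_N^+ with finite energy (v ∈ dom E). Then E(u,v) = Σ_{p ∈ V_M} v(p) (du)(p) − ∫_{Σ_N^+} f v dμ. -/

import Mathlib

open Filter Topology MeasureTheory Finset Classical

noncomputable section

/-- The one-sided full shift space `Σ_N^+` on `N` symbols; coordinates are indexed
from `0`, so the paper's `x_1 x_2 ⋯` is `x 0, x 1, ⋯` here. It carries the product
of the discrete topology on `Fin N`. -/
abbrev SSp (N : ℕ) : Type := ℕ → Fin N

/-- The level-`m` vertex set `V_m = {p : p_i = p_{i+1} for all i ≥ m+1}` (1-based),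
i.e. the sequences that are constant from (0-based) coordinate `m` on.  It is
realized as a `Finset` via the parametrization by the first `m+1` coordinates;
see `mem_V` for the defining property. -/
noncomputable def V (N m : ℕ) : Finset (SSp N) :=
  (Finset.univ : Finset (Fin (m + 1) → Fin N)).image
    (fun w j => w ⟨min j m, by omega⟩)

lemma const_from (N m : ℕ) (p : SSp N) (h : ∀ i, m ≤ i → p i = p (i + 1)) :
    ∀ j, m ≤ j → p j = p m := by
  intro j hj
  induction j with
  | zero => have : m = 0 := by omega
            simp [this]
  | succ k ih =>
      rcases Nat.lt_or_ge k m with hk | hk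
      · have : m = k + 1 := by omega
        simp [this]
      · rw [← h k hk]
        exact ih hk

/-- Membership in `V N m` is exactly the paper's condition
`p_i = p_{i+1}` for all `i ≥ m+1` (1-based), i.e. `p i = p (i+1)` for all `i ≥ m`. -/
lemma mem_V {N m : ℕ} {p : SSp N} :
    p ∈ V N m ↔ ∀ i, m ≤ i → p i = p (i + 1) := by
  classical
  constructor
  · intro hp i hi
    simp only [V, Finset.mem_image] at hp
    obtain ⟨w, -, rfl⟩ := hp
    have h1 : min i m = m := by omega
    have h2 : min (i + 1) m = m := by omega
    simp [h1, h2]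
  · intro h
    simp only [V, Finset.mem_image]
    refine ⟨fun j => p j, Finset.mem_univ _, ?_⟩
    funext j
    rcases Nat.lt_or_ge j m with hj | hj
    · have : min j m = j := by omega
      simp [this]
    · have : min j m = m := by omega
      simp only [this]
      exact (const_from N m p h j hj).symm

/-- The deleted neighbourhood `U_{p,m} = {q ∈ V_m : q ≠ p, q_i = p_i for 1 ≤ i ≤ m}`
(1-based), i.e. `q` agrees with `p` on the first `m` (0-based: `i < m`) coordinates. -/
noncomputable def U (N m : ℕ) (p : SSp N) : Finset (SSp N) :=
  (V N m).filter (fun q => q ≠ p ∧ ∀ i, i < m → q i = p i)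

/-- `κ_p = min {j : p ∈ V_j}`. -/
noncomputable def kappa (N : ℕ) (p : SSp N) : ℕ := sInf {j | p ∈ V N j}

/-- The difference operator
`H_m u (p) = Σ_{i = κ_p}^{m} Σ_{q ∈ U_{p,i}} (u(q) − u(p))`. -/
noncomputable def H (N m : ℕ) (u : SSp N → ℝ) (p : SSp N) : ℝ :=
  ∑ i ∈ Finset.Icc (kappa N p) m, ∑ q ∈ U N i p, (u q - u p)

/-- The Dirichlet form `E_{H_m}(u, v) = − Σ_{p ∈ V_m} u(p) · H_m v(p)`. -/
noncomputable def EH (N m : ℕ) (u v : SSp N → ℝ) : ℝ :=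
  -∑ p ∈ V N m, u p * H N m v p

/-- The cylinder set `[p_1 ⋯ p_m]`, determined by the first `m` coordinates of `p`. -/
def cyl (N m : ℕ) (p : SSp N) : Set (SSp N) := {x | ∀ i, i < m → x i = p i}

/-- `χ_p^m` : the indicator function of the cylinder set `[p_1 ⋯ p_{m+1}]`. -/
noncomputable def chi (N m : ℕ) (p : SSp N) : SSp N → ℝ :=
  (cyl N (m + 1) p).indicator 1

/-- `u ∈ dom E`: `u` is continuous and the energy
`E(u) = lim_m E_{H_m}(u|_{V_m})` exists (and is finite). -/
def MemDomE (N : ℕ) (u : SSp N → ℝ) : Prop :=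
  Continuous u ∧ ∃ L : ℝ, Tendsto (fun m => EH N m u u) atTop (nhds L)

/-- `v ∈ dom_M E`: `v` has finite energy and vanishes on the boundary `V_M`. -/
def MemDomME (N M : ℕ) (v : SSp N → ℝ) : Prop :=
  MemDomE N v ∧ ∀ p ∈ V N M, v p = 0

/-- `u ∈ 𝒟_M` with `Δ u = f` (strong formulation with boundary `V_M`):
`u` and `f` are continuous and
`lim_{m → ∞} max_{p ∈ V_m ∖ V_M} |N^{m+1} H_m u(p) − f(p)| = 0`. -/
def IsLaplacianOn (N M : ℕ) (u f : SSp N → ℝ) : Prop :=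
  Continuous u ∧ Continuous f ∧
    ∀ ε : ℝ, 0 < ε → ∃ m₀ : ℕ, ∀ m, m₀ ≤ m → ∀ p ∈ V N m, p ∉ V N M →
      |(N : ℝ) ^ (m + 1) * H N m u p - f p| < ε

/-- `u ∈ D_μ` with `Δ u = f` (original definition of the Laplacian):
`u` and `f` are continuous and
`lim_{m → ∞} max_{p ∈ V_m ∖ V_{m−1}} |N^{m+1} H_m u(p) − f(p)| = 0`
(the level is written `m+1` to avoid natural subtraction). -/
def IsLaplacianDmu (N : ℕ) (u f : SSp N → ℝ) : Prop :=
  Continuous u ∧ Continuous f ∧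
    ∀ ε : ℝ, 0 < ε → ∃ m₀ : ℕ, ∀ m, m₀ ≤ m → ∀ p ∈ V N (m + 1), p ∉ V N m →
      |(N : ℝ) ^ (m + 2) * H N (m + 1) u p - f p| < ε

/-- `μ` is the equidistributed Bernoulli measure:
`μ([p_1 ⋯ p_m]) = N^{−m}` for every cylinder set. -/
def IsBernoulli (N : ℕ) (μ : Measure (SSp N)) : Prop :=
  ∀ (m : ℕ) (p : SSp N), μ (cyl N m p) = (N : ENNReal)⁻¹ ^ m

/-- `ρ(x,y) = min {i : x_i ≠ y_i}` (1-based; `0`-based first disagreement plus one). -/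
noncomputable def rho (N : ℕ) (x y : SSp N) : ℕ := sInf {i | x i ≠ y i} + 1

/-- The matrix `(G_m)_{pq}`: `2/N` if `q = p`, `1/N` if `q ∈ U_{p,m}`, `0` otherwise. -/
noncomputable def Gmat (N m : ℕ) (p q : SSp N) : ℝ :=
  if q = p then 2 / N else if q ∈ U N m p then 1 / N else 0

/-- The Green's function
`g(x,y) = Σ_{m=1}^{ρ(x,y)−1} Σ_{r,s ∈ V_m ∖ V_{m−1}} (G_m)_{rs} χ_r^m(x) χ_s^m(y)`
for `ρ(x,y) > 1`, and `g(x,y) = 0` for `ρ(x,y) = 1` (the sum is then empty). -/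
noncomputable def greenFn (N : ℕ) (x y : SSp N) : ℝ :=
  ∑ m ∈ Finset.Icc 1 (rho N x y - 1),
    ∑ r ∈ (V N m).filter (fun r => r ∉ V N (m - 1)),
      ∑ s ∈ (V N m).filter (fun s => s ∉ V N (m - 1)),
        Gmat N m r s * chi N m r x * chi N m s y

/-- The Green's operator `G_μ f (x) = ∫_{Σ_N^+ ∖ {x}} g(x,y) f(y) dμ(y)`. -/
noncomputable def Gop (N : ℕ) (μ : Measure (SSp N)) (f : SSp N → ℝ) (x : SSp N) : ℝ :=
  ∫ y in ({x}ᶜ : Set (SSp N)), greenFn N x y * f y ∂μ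

/-!
At a fixed level the difference form is symmetric, and it vanishes against functions that do not
see the coordinates distinguishing neighbours; hence `E_{H_m}(u, w)` is independent of `m ≥ M`
when `w` depends only on the first `M + 1` coordinates. By symmetry, `E_{H_m}(u, v)` is a boundary
sum over `V_M` minus the sum of `v · H_m u` over `V_m ∖ V_M`. The latter is a Riemann sum for
`∫ (Δu) v`: averaging over `V_m` is integrating against `μ` after freezing sequences at
coordinate `m`, and `V_M` is a null set. Testing with the indicator of a level-`M` cylinder, whose
energy is independent of `m` and whose boundary sum is the single term `-H_m u(p)`, shows that the
Neumann derivatives exist.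
-/

theorem continuous_of_dependsOn_finite {ι β : Type*} {α : ι → Type*}
    [∀ i, TopologicalSpace (α i)] [∀ i, DiscreteTopology (α i)] [TopologicalSpace β]
    {g : (∀ i, α i) → β} {s : Set ι} (hs : s.Finite) (hg : DependsOn g s) : Continuous g := by
  cases isEmpty_or_nonempty β with
  | inl _ => exact continuous_of_const fun x => isEmptyElim (g x)
  | inr _ =>
    have := hs.to_subtype
    obtain ⟨g', rfl⟩ := dependsOn_iff_exists_comp.1 hg
    exact continuous_of_discreteTopology.comp
      (continuous_pi fun i : s => continuous_apply (i : ι))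

section Vertices

variable {N m : ℕ} {p : SSp N}

theorem V_mono (N : ℕ) : Monotone (V N) := fun _ _ h _ hp =>
  mem_V.2 fun i hi => mem_V.1 hp i (h.trans hi)

theorem mem_V_iff_kappa_le (hp : p ∈ V N m) {i : ℕ} : p ∈ V N i ↔ kappa N p ≤ i :=
  ⟨fun h => Nat.sInf_le h, fun h => V_mono N h (Nat.sInf_mem (s := {j | p ∈ V N j}) ⟨m, hp⟩)⟩

/-- The vertex of level `m` approximating `x`: the one agreeing with `x` on the coordinates `≤ m`,
obtained by repeating coordinate `m` forever. -/
def freeze (N m : ℕ) (x : SSp N) : SSp N := fun j => x (min j m)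

theorem freeze_mem_V (N m : ℕ) (x : SSp N) : freeze N m x ∈ V N m :=
  mem_V.2 fun i hi => by simp only [freeze, min_eq_right hi, min_eq_right (Nat.le_succ_of_le hi)]

theorem freeze_eq_self (hp : p ∈ V N m) : freeze N m p = p := by
  funext j
  rcases le_total j m with hj | hj
  · simp only [freeze, min_eq_left hj]
  · simp only [freeze, min_eq_right hj, const_from N m p (mem_V.1 hp) j hj]

theorem dependsOn_freeze (N m : ℕ) : DependsOn (freeze N m) (Set.Iic m) :=
  fun _ _ h => funext fun j => h (min j m) (min_le_right j m)

theorem tendsto_freeze (x : SSp N) : Tendsto (fun m => freeze N m x) atTop (𝓝 x) := by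
  refine tendsto_pi_nhds.2 fun j => tendsto_const_nhds.congr' ?_
  filter_upwards [eventually_ge_atTop j] with m hm
  rw [freeze, min_eq_left hm]

theorem chi_eq_ite (hp : p ∈ V N m) (x : SSp N) :
    chi N m p x = if freeze N m x = p then 1 else 0 := by
  have hcyl : x ∈ cyl N (m + 1) p ↔ freeze N m x = p := by
    constructor
    · intro h
      rw [← freeze_eq_self hp]
      exact dependsOn_freeze N m fun i hi => h i (Nat.lt_succ_of_le hi)
    · rintro rfl i hi
      rw [freeze, min_eq_left (Nat.lt_succ_iff.1 hi)]
  simp only [chi, Set.indicator_apply, hcyl, Pi.one_apply]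

theorem dependsOn_chi (hp : p ∈ V N m) : DependsOn (chi N m p) (Set.Iic m) := fun x y h => by
  rw [chi_eq_ite hp, chi_eq_ite hp, dependsOn_freeze N m h]

theorem comp_freeze_eq_sum_chi (N m : ℕ) (g : SSp N → ℝ) (x : SSp N) :
    g (freeze N m x) = ∑ p ∈ V N m, chi N m p x * g p := by
  rw [Finset.sum_congr rfl fun p hp => by rw [chi_eq_ite hp, ite_mul, one_mul, zero_mul],
    Finset.sum_ite_eq, if_pos (freeze_mem_V N m x)]

theorem sum_chi_mul (hp : p ∈ V N m) (g : SSp N → ℝ) :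
    ∑ q ∈ V N m, chi N m p q * g q = g p := by
  rw [Finset.sum_eq_single_of_mem p hp, chi_eq_ite hp, freeze_eq_self hp, if_pos rfl, one_mul]
  intro q hq hqp
  rw [chi_eq_ite hp, freeze_eq_self hq, if_neg hqp, zero_mul]

end Vertices

section Energy

variable {N M m : ℕ}

/-- The contribution of level `i` to the Dirichlet forms `E_{H_m}`, `m ≥ i`. -/
def levelForm (N i : ℕ) (u v : SSp N → ℝ) : ℝ :=
  -∑ p ∈ V N i, ∑ q ∈ U N i p, u p * (v q - v p)

theorem mem_V_and_mem_U_comm {i : ℕ} {p q : SSp N} :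
    p ∈ V N i ∧ q ∈ U N i p ↔ p ∈ U N i q ∧ q ∈ V N i := by
  simp only [U, Finset.mem_filter, ne_comm (a := q), eq_comm (a := q _)]
  tauto

theorem levelForm_comm (N i : ℕ) (u v : SSp N → ℝ) : levelForm N i u v = levelForm N i v u := by
  have swap : ∑ p ∈ V N i, ∑ q ∈ U N i p, u p * v q = ∑ p ∈ V N i, ∑ q ∈ U N i p, v p * u q := by
    rw [Finset.sum_comm' fun _ _ => mem_V_and_mem_U_comm]
    simp only [mul_comm]
  simp only [levelForm, mul_sub, Finset.sum_sub_distrib]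
  rw [swap]
  simp only [mul_comm]

theorem levelForm_eq_zero_of_dependsOn {i : ℕ} {w : SSp N → ℝ} (hw : DependsOn w (Set.Iio i))
    (u : SSp N → ℝ) : levelForm N i u w = 0 := by
  refine neg_eq_zero.2 (Finset.sum_eq_zero fun p _ => Finset.sum_eq_zero fun q hq => ?_)
  rw [hw (Finset.mem_filter.1 hq).2.2, sub_self, mul_zero]

theorem EH_eq_sum_levelForm (N m : ℕ) (u v : SSp N → ℝ) :
    EH N m u v = ∑ i ∈ Finset.range (m + 1), levelForm N i u v := by
  simp only [EH, H, levelForm, Finset.sum_neg_distrib, Finset.mul_sum]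
  congr 1
  refine Finset.sum_comm' fun p i => ?_
  rw [Finset.mem_Icc, Finset.mem_range, Nat.lt_succ_iff]
  constructor
  · rintro ⟨hp, hi, him⟩
    exact ⟨(mem_V_iff_kappa_le hp).2 hi, him⟩
  · rintro ⟨hp, him⟩
    exact ⟨V_mono N him hp, (mem_V_iff_kappa_le hp).1 hp, him⟩

theorem EH_comm (N m : ℕ) (u v : SSp N → ℝ) : EH N m u v = EH N m v u := by
  simp only [EH_eq_sum_levelForm, levelForm_comm N _ u v]

theorem EH_eq_of_dependsOn (hm : M ≤ m) {w : SSp N → ℝ} (hw : DependsOn w (Set.Iic M))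
    (u : SSp N → ℝ) : EH N m u w = EH N M u w := by
  rw [EH_eq_sum_levelForm, EH_eq_sum_levelForm]
  refine (Finset.sum_subset (Finset.range_mono (Nat.succ_le_succ hm)) fun i _ hi => ?_).symm
  have hMi : M < i := by simpa using hi
  exact levelForm_eq_zero_of_dependsOn (hw.mono fun _ hj => lt_of_le_of_lt hj hMi) u

theorem EH_eq_boundary_sub_interior (hm : M ≤ m) (u v : SSp N → ℝ) :
    EH N m u v = ∑ p ∈ V N M, v p * -H N m u p - ∑ p ∈ V N m \ V N M, v p * H N m u p := by
  rw [EH_comm, EH, ← Finset.sum_sdiff (V_mono N hm)]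
  simp only [mul_neg, Finset.sum_neg_distrib]
  ring

end Energy

section RiemannSums

variable {N : ℕ} {μ : Measure (SSp N)}

theorem measurableSet_cyl (N m : ℕ) (p : SSp N) : MeasurableSet (cyl N m p) :=
  MeasurableSet.pi (Set.Iio m).to_countable fun i _ => measurableSet_singleton (p i)

theorem IsBernoulli.nullSingletonClass (hμ : IsBernoulli N μ) (hN : 2 ≤ N) :
    NullSingletonClass μ where
  measure_singleton x := by
    have hinv : (N : ENNReal)⁻¹ < 1 := ENNReal.inv_lt_one.2 (by exact_mod_cast hN)
    refine le_antisymm (ge_of_tendsto' (ENNReal.tendsto_pow_atTop_nhds_zero_of_lt_one hinv)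
      fun m => ?_) zero_le
    rw [← hμ m x]
    exact measure_mono (Set.singleton_subset_iff.2 fun _ _ => rfl)

theorem IsBernoulli.integral_chi (hμ : IsBernoulli N μ) (m : ℕ) (p : SSp N) :
    ∫ x, chi N m p x ∂μ = ((N : ℝ) ^ (m + 1))⁻¹ := by
  simp only [chi, integral_indicator_one (measurableSet_cyl N (m + 1) p), measureReal_def,
    hμ (m + 1) p, ENNReal.toReal_pow, ENNReal.toReal_inv, ENNReal.toReal_natCast, inv_pow]

variable [IsFiniteMeasure μ]

theorem IsBernoulli.integral_comp_freeze (hμ : IsBernoulli N μ) (m : ℕ) (g : SSp N → ℝ) :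
    ∫ x, g (freeze N m x) ∂μ = ((N : ℝ) ^ (m + 1))⁻¹ * ∑ p ∈ V N m, g p := by
  have integrable_chi (p : SSp N) : Integrable (chi N m p) μ :=
    (integrable_const 1).indicator (measurableSet_cyl N (m + 1) p)
  simp only [comp_freeze_eq_sum_chi]
  rw [integral_finsetSum _ fun p _ => (integrable_chi p).mul_const (g p), Finset.mul_sum]
  simp only [integral_mul_const, hμ.integral_chi]

theorem IsBernoulli.tendsto_average_of_dominated (hμ : IsBernoulli N μ)
    {g : ℕ → SSp N → ℝ} {G : SSp N → ℝ} {C : ℝ}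
    (hbound : ∀ᶠ m in atTop, ∀ p ∈ V N m, |g m p| ≤ C)
    (hlim : ∀ᵐ x ∂μ, Tendsto (fun m => g m (freeze N m x)) atTop (𝓝 (G x))) :
    Tendsto (fun m => ((N : ℝ) ^ (m + 1))⁻¹ * ∑ p ∈ V N m, g m p) atTop (𝓝 (∫ x, G x ∂μ)) := by
  simp only [← hμ.integral_comp_freeze]
  refine tendsto_integral_filter_of_dominated_convergence (fun _ => C)
    (.of_forall fun m => ?_) ?_ (integrable_const C) hlim
  · have hdep : DependsOn (fun x => g m (freeze N m x)) (Set.Iic m) :=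
      fun _ _ h => congrArg (g m) (dependsOn_freeze N m h)
    exact (continuous_of_dependsOn_finite (Set.finite_Iic m) hdep).aestronglyMeasurable
  · exact hbound.mono fun m hm => ae_of_all μ fun x => hm _ (freeze_mem_V N m x)

end RiemannSums

section GaussGreen

variable {N M : ℕ} {u f : SSp N → ℝ}

theorem eventually_freeze_notMem_V {x : SSp N} (hx : x ∉ V N M) :
    ∀ᶠ m in atTop, freeze N m x ∉ V N M :=
  (tendsto_freeze x).eventually ((V N M).finite_toSet.isClosed.isOpen_compl.mem_nhds hx)

theorem IsLaplacianOn.tendsto_pow_mul_H_freeze (huf : IsLaplacianOn N M u f) {x : SSp N}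
    (hx : x ∉ V N M) :
    Tendsto (fun m => (N : ℝ) ^ (m + 1) * H N m u (freeze N m x)) atTop (𝓝 (f x)) := by
  obtain ⟨-, hf, hlim⟩ := huf
  have herr : Tendsto (fun m => (N : ℝ) ^ (m + 1) * H N m u (freeze N m x) - f (freeze N m x))
      atTop (𝓝 0) := by
    refine NormedAddGroup.tendsto_nhds_zero.2 fun ε hε => ?_
    obtain ⟨m₀, hm₀⟩ := hlim ε hε
    filter_upwards [eventually_ge_atTop m₀, eventually_freeze_notMem_V hx] with m hm hxm
    exact hm₀ m hm _ (freeze_mem_V N m x) hxm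
  simpa using herr.add ((hf.tendsto x).comp (tendsto_freeze x))

theorem IsLaplacianOn.exists_eventually_abs_pow_mul_H_le (huf : IsLaplacianOn N M u f) :
    ∃ C, ∀ᶠ m in atTop, ∀ p ∈ V N m, p ∉ V N M → |(N : ℝ) ^ (m + 1) * H N m u p| ≤ C := by
  obtain ⟨-, hf, hlim⟩ := huf
  obtain ⟨C, hC⟩ := isCompact_univ.exists_bound_of_continuousOn hf.continuousOn
  obtain ⟨m₀, hm₀⟩ := hlim 1 one_pos
  refine ⟨1 + C, (eventually_ge_atTop m₀).mono fun m hm p hp hpM => ?_⟩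
  calc |(N : ℝ) ^ (m + 1) * H N m u p|
      = |((N : ℝ) ^ (m + 1) * H N m u p - f p) + f p| := by rw [sub_add_cancel]
    _ ≤ |(N : ℝ) ^ (m + 1) * H N m u p - f p| + |f p| := abs_add_le _ _
    _ ≤ 1 + C := add_le_add (hm₀ m hm p hp hpM).le (hC p (Set.mem_univ p))

variable {μ : Measure (SSp N)} [IsFiniteMeasure μ]

theorem tendsto_sum_interior_mul_H (hN : 2 ≤ N) (hμ : IsBernoulli N μ)
    (huf : IsLaplacianOn N M u f) {w : SSp N → ℝ} (hw : Continuous w) :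
    Tendsto (fun m => ∑ p ∈ V N m \ V N M, w p * H N m u p) atTop (𝓝 (∫ x, f x * w x ∂μ)) := by
  let g (m : ℕ) (p : SSp N) : ℝ := if p ∈ V N M then 0 else N ^ (m + 1) * H N m u p * w p
  obtain ⟨C, hC⟩ := huf.exists_eventually_abs_pow_mul_H_le
  obtain ⟨D, hD⟩ := isCompact_univ.exists_bound_of_continuousOn hw.continuousOn
  have hbound : ∀ᶠ m in atTop, ∀ p ∈ V N m, |g m p| ≤ |C * D| := by
    filter_upwards [hC] with m hCm p hp
    by_cases hpM : p ∈ V N M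
    · simp only [g, if_pos hpM, abs_zero, abs_nonneg]
    · simp only [g, if_neg hpM, abs_mul _ (w p)]
      exact (mul_le_mul (hCm p hp hpM) (hD p (Set.mem_univ p)) (abs_nonneg _)
        ((abs_nonneg _).trans (hCm p hp hpM))).trans (le_abs_self _)
  have hlim : ∀ᵐ x ∂μ, Tendsto (fun m => g m (freeze N m x)) atTop (𝓝 (f x * w x)) := by
    have := hμ.nullSingletonClass hN
    filter_upwards [measure_eq_zero_iff_ae_notMem.1 ((V N M).measure_zero μ)] with x hx
    have hwlim := (hw.tendsto x).comp (tendsto_freeze x)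
    refine ((huf.tendsto_pow_mul_H_freeze hx).mul hwlim).congr' ?_
    filter_upwards [eventually_freeze_notMem_V hx] with m hxm
    exact (if_neg hxm).symm
  refine (hμ.tendsto_average_of_dominated hbound hlim).congr fun m => ?_
  have hN0 : (N : ℝ) ^ (m + 1) ≠ 0 := pow_ne_zero _ (by exact_mod_cast (by omega : N ≠ 0))
  rw [Finset.mul_sum, Finset.sdiff_eq_filter, Finset.sum_filter]
  refine Finset.sum_congr rfl fun p _ => ?_
  by_cases hpM : p ∈ V N M
  · simp only [g, if_pos hpM, not_true, if_false, mul_zero, hpM]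
  · simp only [g, if_neg hpM, hpM, not_false_iff, if_true]
    field_simp

/-- The Neumann derivative `(du)(p) = lim_m (-H_m u(p))`; as `limUnder`, it is an unspecified
number when the limit does not exist. -/
def neumannDeriv (N : ℕ) (u : SSp N → ℝ) (p : SSp N) : ℝ :=
  limUnder atTop fun m => -H N m u p

theorem tendsto_neg_H_neumannDeriv (hN : 2 ≤ N) (hμ : IsBernoulli N μ)
    (huf : IsLaplacianOn N M u f) {p : SSp N} (hp : p ∈ V N M) :
    Tendsto (fun m => -H N m u p) atTop (𝓝 (neumannDeriv N u p)) := by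
  have hchi : DependsOn (chi N M p) (Set.Iic M) := dependsOn_chi hp
  have hlim : Tendsto (fun m => EH N M u (chi N M p) +
      ∑ q ∈ V N m \ V N M, chi N M p q * H N m u q) atTop
      (𝓝 (EH N M u (chi N M p) + ∫ x, f x * chi N M p x ∂μ)) :=
    (tendsto_sum_interior_mul_H hN hμ huf
      (continuous_of_dependsOn_finite (Set.finite_Iic M) hchi)).const_add _
  refine tendsto_nhds_limUnder ⟨_, hlim.congr' ?_⟩
  filter_upwards [eventually_ge_atTop M] with m hm
  rw [← EH_eq_of_dependsOn hm hchi, EH_eq_boundary_sub_interior hm, sum_chi_mul hp, sub_add_cancel]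

theorem statement12_general (hN : 2 ≤ N) (hμ : IsBernoulli N μ) (huf : IsLaplacianOn N M u f)
    {v : SSp N → ℝ} (hv : Continuous v) :
    ∃ du : SSp N → ℝ,
      (∀ p ∈ V N M, Tendsto (fun m => -H N m u p) atTop (𝓝 (du p))) ∧
      Tendsto (fun m => EH N m u v) atTop
        (𝓝 (∑ p ∈ V N M, v p * du p - ∫ x, f x * v x ∂μ)) := by
  have hdu : ∀ p ∈ V N M, Tendsto (fun m => -H N m u p) atTop (𝓝 (neumannDeriv N u p)) :=
    fun p hp => tendsto_neg_H_neumannDeriv hN hμ huf hp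
  have hboundary : Tendsto (fun m => ∑ p ∈ V N M, v p * -H N m u p) atTop
      (𝓝 (∑ p ∈ V N M, v p * neumannDeriv N u p)) :=
    tendsto_finsetSum _ fun p hp => (hdu p hp).const_mul (v p)
  have hinterior := tendsto_sum_interior_mul_H hN hμ huf hv
  refine ⟨neumannDeriv N u, hdu, (hboundary.sub hinterior).congr' ?_⟩
  filter_upwards [eventually_ge_atTop M] with m hm
  exact (EH_eq_boundary_sub_interior hm u v).symm

end GaussGreen

/-- for `u ∈ 𝒟_M` with `Δu = f` and `v ∈ dom E`,
`E(u,v) = Σ_{p ∈ V_M} v(p)(du)(p) − ∫ f v dμ`, where `(du)(p) = lim_m (−H_m u(p))`. -/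
theorem statement12 (N : ℕ) (hN : 2 ≤ N)
    (μ : Measure (SSp N)) [IsProbabilityMeasure μ] (hμ : IsBernoulli N μ)
    (M : ℕ) (u f : SSp N → ℝ) (huf : IsLaplacianOn N M u f)
    (v : SSp N → ℝ) (hv : MemDomE N v) :
    ∃ du : SSp N → ℝ,
      (∀ p ∈ V N M, Tendsto (fun m => -(H N m u p)) atTop (nhds (du p))) ∧
      Tendsto (fun m => EH N m u v) atTop
        (nhds (∑ p ∈ V N M, v p * du p - ∫ x, f x * v x ∂μ)) :=
  statement12_general hN hμ huf hv.1
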